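/- Let k be a positive integer and let n be an integer with k² + 1 ≤ n ≤ k² + k. Then δ(n) ≥ 2k + 1, and δ(n) = 2k + 1 holds if and only if n = (k² + k) − (l² + l) for some non-negative integer l with l² + l ≤ k − 1. -/

import Mathlib

/-- `staircaseDelta n` is the minimum of `r + s` over all pairs of positive
integers `(r, s)` with `r ≤ s` and `r * s = n`. -/
noncomputable def staircaseDelta (n : ℕ) : ℕ :=
  sInf {w : ℕ | ∃ r s : ℕ, 0 < r ∧ r ≤ s ∧ r * s = n ∧ w = r + s}

/-!
Since `4 r s ≤ (r + s)²`, a factorization `n = r s` with `n > k²` has `r + s > 2 k`. The pairs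
`r ≤ s` with `r + s = 2 k + 1` are the pairs `(k - l, k + l + 1)`, whose product
`(k² + k) - (l² + l)` exceeds `k²` exactly when `l² + l < k`.
-/

theorem exists_mul_eq_and_staircaseDelta_eq_add {n : ℕ} (hn : 0 < n) :
    ∃ r s : ℕ, 0 < r ∧ r ≤ s ∧ r * s = n ∧ staircaseDelta n = r + s :=
  Nat.sInf_mem (s := {w : ℕ | ∃ r s : ℕ, 0 < r ∧ r ≤ s ∧ r * s = n ∧ w = r + s})
    ⟨1 + n, 1, n, one_pos, hn, one_mul n, rfl⟩

theorem staircaseDelta_mul_le_add {r s : ℕ} (hr : 0 < r) (hrs : r ≤ s) :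
    staircaseDelta (r * s) ≤ r + s :=
  Nat.sInf_le ⟨r, s, hr, hrs, rfl, rfl⟩

theorem four_mul_le_staircaseDelta_sq {n : ℕ} (hn : 0 < n) : 4 * n ≤ staircaseDelta n ^ 2 := by
  obtain ⟨r, s, -, -, rfl, hδ⟩ := exists_mul_eq_and_staircaseDelta_eq_add hn
  rw [hδ, ← mul_assoc]
  exact four_mul_le_sq_add r s

theorem two_mul_lt_staircaseDelta {k n : ℕ} (hn : k ^ 2 < n) : 2 * k < staircaseDelta n := by
  refine lt_of_pow_lt_pow_left₀ 2 (Nat.zero_le _) ?_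
  calc (2 * k) ^ 2 = 4 * k ^ 2 := by ring
    _ < 4 * n := by gcongr
    _ ≤ staircaseDelta n ^ 2 := four_mul_le_staircaseDelta_sq (Nat.zero_lt_of_lt hn)

theorem sub_mul_add_add_one {k l : ℕ} (h : l ≤ k) :
    (k - l) * (k + l + 1) = (k ^ 2 + k) - (l ^ 2 + l) := by
  obtain ⟨r, rfl⟩ := Nat.exists_eq_add_of_le' h
  rw [Nat.add_sub_cancel]
  exact Nat.eq_sub_of_add_eq (by ring)

theorem staircaseDelta_eq_two_mul_add_one_iff {k n : ℕ} (hn : k ^ 2 < n) :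
    staircaseDelta n = 2 * k + 1 ↔ ∃ l < k, n = (k - l) * (k + l + 1) := by
  constructor
  · intro hδ
    obtain ⟨r, s, hr, hrs, hmul, hsum⟩ :=
      exists_mul_eq_and_staircaseDelta_eq_add (Nat.zero_lt_of_lt hn)
    have hr_eq : r = k - (k - r) := by lia
    have hs_eq : s = k + (k - r) + 1 := by lia
    exact ⟨k - r, by lia, by rw [← hr_eq, ← hs_eq, hmul]⟩
  · rintro ⟨l, hl, rfl⟩
    have hle : staircaseDelta ((k - l) * (k + l + 1)) ≤ (k - l) + (k + l + 1) :=
      staircaseDelta_mul_le_add (Nat.sub_pos_of_lt hl) (by lia)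
    have hlt := two_mul_lt_staircaseDelta hn
    lia

theorem stmt14_general (k n : ℕ) (hn : k ^ 2 + 1 ≤ n) :
    2 * k + 1 ≤ staircaseDelta n ∧
    (staircaseDelta n = 2 * k + 1 ↔
      ∃ l : ℕ, l ^ 2 + l < k ∧ n = (k ^ 2 + k) - (l ^ 2 + l)) := by
  refine ⟨two_mul_lt_staircaseDelta hn, (staircaseDelta_eq_two_mul_add_one_iff hn).trans ?_⟩
  refine exists_congr fun l => ⟨fun ⟨hl, h⟩ => ?_, fun ⟨hl, h⟩ => ?_⟩
  · rw [sub_mul_add_add_one hl.le] at h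
    exact ⟨by lia, h⟩
  · have hlk : l < k := (Nat.le_add_left l (l ^ 2)).trans_lt hl
    exact ⟨hlk, h.trans (sub_mul_add_add_one hlk.le).symm⟩

/-- Let `k ≥ 1` and `k^2 + 1 ≤ n ≤ k^2 + k`. Then `δ(n) ≥ 2k + 1`, and
`δ(n) = 2k + 1` iff `n = (k^2 + k) - (l^2 + l)` for some `l ≥ 0` with
`l^2 + l ≤ k - 1`. -/
theorem stmt14 (k n : ℕ) (hk : 0 < k) (h1 : k ^ 2 + 1 ≤ n) (h2 : n ≤ k ^ 2 + k) :
    2 * k + 1 ≤ staircaseDelta n ∧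
    (staircaseDelta n = 2 * k + 1 ↔
      ∃ l : ℕ, l ^ 2 + l ≤ k - 1 ∧ n = (k ^ 2 + k) - (l ^ 2 + l)) := by
  simpa only [Nat.le_sub_one_iff_lt hk] using stmt14_general k n h1
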